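/- (ii) Let k be a positive even integer, ε ∈ {±1}, f₀ ∈ M_k(Γ₀⁺(2),ε), f₁ ∈ M_{k-2}(Γ₀⁺(2),ε) with f₁ ≢ 0, and f = f₀ + M₂* f₁ where M₂*(z) = (2E₂(2z)+E₂(z))/3 (here α = 4/(πi)). Then there exist κ_{ρ₁}, κ_{ρ₂} ∈ (1/2)ℤ with κ_{ρ₁}, κ_{ρ₂} ≥ 1/2 such that lim_{z→ρ₁} (z−ρ₁)² Q_f(z) = (1/4 − κ_{ρ₁}²)/(4π²) and lim_{z→ρ₂} (z−ρ₂)² Q_f(z) = (1/4 − κ_{ρ₂}²)/(4π²), where ρ₁ = i/√2 and ρ₂ = (1+i)/2, and both integers 2κ_{ρ₁} and 2κ_{ρ₂} are odd. (iii) Let m ∈ {0,1,2,3}, k a positive integer with k ≡ m (mod 2), f₀ ∈ M_k(Γ₀⁺(3),χ^m), f₁ ∈ M_{k-2}(Γ₀⁺(3),χ^m) with f₁ ≢ 0, and f = f₀ + M₂* f₁ where now M₂*(z) = (3E₂(3z)+E₂(z))/4 (here α = 3/(πi)). Then there exist κ_{ρ₁}, κ_{ρ₂} ∈ (1/2)ℤ,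 ≥ 1/2, with the same limit relations at ρ₁ = i/√3 and ρ₂ = (3+√−3)/6, such that 2κ_{ρ₁} is odd and 2κ_{ρ₂} is coprime to 6. -/

import Mathlib

noncomputable section

open Complex Matrix Filter Topology

abbrev SL2R := Matrix.SpecialLinearGroup (Fin 2) ℝ
abbrev SL2Z := Matrix.SpecialLinearGroup (Fin 2) ℤ

/-- The upper half-plane, as a subset of `ℂ`. -/
def UHP : Set ℂ := {z : ℂ | 0 < z.im}

/-- The embedding of `SL(2,ℤ)` into `SL(2,ℝ)`. -/
def toR : SL2Z →* SL2R := Matrix.SpecialLinearGroup.map (Int.castRingHom ℝ)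

/-- `SL(2,ℤ)` as a subgroup of `SL(2,ℝ)`. -/
def SL2ZR : Subgroup SL2R := Subgroup.map toR ⊤

/-- Möbius action of a real matrix on a complex number. -/
def moeb (γ : SL2R) (z : ℂ) : ℂ :=
  ((γ.1 0 0 : ℂ) * z + (γ.1 0 1 : ℂ)) / ((γ.1 1 0 : ℂ) * z + (γ.1 1 1 : ℂ))

/-- The automorphy factor `cz + d`. -/
def jfac (γ : SL2R) (z : ℂ) : ℂ := (γ.1 1 0 : ℂ) * z + (γ.1 1 1 : ℂ)

/-- A holomorphic modular form of weight `k` and character `χ` on `Γ ≤ SL(2,ℝ)`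
(for `Γ` commensurable with `SL(2,ℤ)`): holomorphic on `ℍ`, satisfying the
transformation law, and holomorphic (bounded) at every cusp. -/
structure IsModularForm (Γ : Subgroup SL2R) (χ : SL2R → ℂ) (k : ℤ) (f : ℂ → ℂ) : Prop where
  holo : DifferentiableOn ℂ f UHP
  transform : ∀ γ ∈ Γ, ∀ z ∈ UHP, f (moeb γ z) = χ γ * jfac γ z ^ k * f z
  bdd_at_cusps : ∀ σ : SL2Z, ∃ C : ℝ, ∀ z ∈ UHP, 1 ≤ z.im →
    ‖jfac (toR σ) z ^ (-k) * f (moeb (toR σ) z)‖ ≤ C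

/-- A finite-order character of `Γ`. -/
def IsCharacter (Γ : Subgroup SL2R) (χ : SL2R → ℂ) : Prop :=
  (∀ γ ∈ Γ, ∀ δ ∈ Γ, χ (γ * δ) = χ γ * χ δ) ∧
    ∃ n : ℕ, 0 < n ∧ ∀ γ ∈ Γ, χ γ ^ n = 1

/-- `φ` is quasimodular of weight 2 and depth 1 on `Γ`, with constant `α`:
`(cz+d)⁻² φ(γz) = φ(z) + α c/(cz+d)`. -/
def IsQuasiWt2 (Γ : Subgroup SL2R) (α : ℂ) (φ : ℂ → ℂ) : Prop :=
  ∀ γ ∈ Γ, ∀ z ∈ UHP,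
    (jfac γ z)⁻¹ ^ 2 * φ (moeb γ z) = φ z + α * (γ.1 1 0 : ℂ) / jfac γ z

/-- `f` has vanishing order `ν` at the cusp `∞`, with respect to `q_N = e^{2πiz/N}`:
`q_N^{-ν}·f(z)` tends to a nonzero constant as `Im z → ∞`. -/
def VOrder (N : ℝ) (f : ℂ → ℂ) (ν : ℝ) : Prop :=
  ∃ c : ℂ, c ≠ 0 ∧ ∀ ε : ℝ, 0 < ε → ∃ Y : ℝ, ∀ z : ℂ, Y ≤ z.im →
    ‖Complex.exp (-(2 * Real.pi * Complex.I * (ν : ℂ) * z / (N : ℂ))) * f z - c‖ < ε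


/-- `Γ₀(N)` as a subgroup of `SL(2,ℝ)`. -/
def Gamma0R (N : ℕ) : Subgroup SL2R := Subgroup.map toR (CongruenceSubgroup.Gamma0 N)

/-- `q = e^{2πiz}`. -/
def qexp (z : ℂ) : ℂ := Complex.exp (2 * Real.pi * Complex.I * z)

/-- The quasimodular Eisenstein series `E₂(z) = 1 - 24 ∑_{n≥1} σ₁(n) qⁿ`. -/
def E2 (z : ℂ) : ℂ :=
  1 - 24 * ∑' n : ℕ, (ArithmeticFunction.sigma 1 (n + 1) : ℂ) * qexp z ^ (n + 1)

/-- `M_k(Γ₀⁺(2),ε)`. -/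
def MFplus2 (ε : ℂ) (k : ℤ) : Set (ℂ → ℂ) :=
  {f | IsModularForm (Gamma0R 2) (fun _ => 1) k f ∧
    ∀ z ∈ UHP, ((Real.sqrt 2 : ℂ) * z) ^ (-k) * f (-1 / (2 * z)) = ε * f z}

/-- `S₃ = (1/√3)(0 -1; 3 0)`. -/
def S3elt : SL2R :=
  ⟨!![0, -(Real.sqrt 3)⁻¹; Real.sqrt 3, 0], by
    have h : Real.sqrt 3 ≠ 0 := by positivity
    rw [Matrix.det_fin_two_of, mul_zero, neg_mul, inv_mul_cancel₀ h, zero_sub, neg_neg]⟩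

/-- `R₃ = (1/√3)(3 -1; 3 0)`. -/
def R3elt : SL2R :=
  ⟨!![Real.sqrt 3, -(Real.sqrt 3)⁻¹; Real.sqrt 3, 0], by
    have h : Real.sqrt 3 ≠ 0 := by positivity
    rw [Matrix.det_fin_two_of, mul_zero, neg_mul, inv_mul_cancel₀ h, zero_sub, neg_neg]⟩

/-- `Γ₀⁺(3) = ⟨Γ₀(3), S₃⟩`. -/
def GammaPlus3 : Subgroup SL2R :=
  Subgroup.closure ((Gamma0R 3 : Set SL2R) ∪ {S3elt})

/-- Modular forms of weight `k` with character `χ` on a subgroup `Γ ≤ SL(2,ℝ)`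
whose only cusp is `∞`: holomorphic on `ℍ`, transforming with `χ·(cz+d)^k`,
and holomorphic (bounded) at `∞`. -/
def MFchar (Γ : Subgroup SL2R) (χ : SL2R → ℂ) (k : ℤ) (f : ℂ → ℂ) : Prop :=
  DifferentiableOn ℂ f UHP ∧
    (∀ γ ∈ Γ, ∀ z ∈ UHP, f (moeb γ z) = χ γ * jfac γ z ^ k * f z) ∧
    ∃ C : ℝ, ∀ z ∈ UHP, 1 ≤ z.im → ‖f z‖ ≤ C

/-- The expression `Q_f = -(1/4π²)[f″/f - (f′/f)(W′/W) + (3/4)(W′/W)² - (1/2)(W″/W)]`. -/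
def Qformula (f W : ℂ → ℂ) (z : ℂ) : ℂ :=
  -(1 / (4 * (Real.pi : ℂ) ^ 2)) *
    (deriv (deriv f) z / f z - (deriv f z / f z) * (deriv W z / W z)
      + (3 / 4) * (deriv W z / W z) ^ 2 - (1 / 2) * (deriv (deriv W) z / W z))


namespace LE

lemma E2_eq (z : UpperHalfPlane) : E2 (z : ℂ) = EisensteinSeries.E2 z := by
  rw [EisensteinSeries.E2_eq_tsum_cexp, E2]
  congr 2
  rw [tsum_pnat_eq_tsum_succ (f := fun n : ℕ =>
    ((ArithmeticFunction.sigma 1 n : ℕ) : ℂ) * cexp (2 * Real.pi * I * (z : ℂ)) ^ n)]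
  simp [qexp]

lemma E2_diff : DifferentiableOn ℂ E2 UHP := by
  have h := UpperHalfPlane.mdifferentiable_iff.mp E2_mdifferentiable
  refine h.congr ?_
  intro z hz
  have := E2_eq ⟨z, hz⟩
  simp only [Function.comp]
  rw [UpperHalfPlane.ofComplex_apply_of_im_pos hz]
  exact this

lemma E2_S (z : ℂ) (hz : z ∈ UHP) :
    E2 (-1 / z) = z ^ 2 * E2 z + 6 * z / ((Real.pi : ℂ) * Complex.I) := by
  have hz0 : z ≠ 0 := by
    rintro rfl
    simp [UHP] at hz
  have h := EisensteinSeries.G2_S_transform ⟨z, hz⟩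
  have h1 := E2_eq ⟨z, hz⟩
  have h2 := E2_eq (ModularGroup.S • (⟨z, hz⟩ : UpperHalfPlane))
  have hS : ((ModularGroup.S • (⟨z, hz⟩ : UpperHalfPlane) : UpperHalfPlane) : ℂ) = -1 / z := by
    rw [UpperHalfPlane.modular_S_smul]
    simp [neg_div, inv_neg]
  rw [hS] at h2
  have h1' : E2 z = _ := h1
  rw [h1', h2]
  have hpi : (Real.pi : ℂ) ≠ 0 := by exact_mod_cast Real.pi_ne_zero
  simp only [EisensteinSeries.E2, Pi.smul_apply, smul_eq_mul, riemannZeta_two]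
  rw [h]
  field_simp
  ring_nf
  simp [Complex.I_sq]

lemma E2_T (z : ℂ) : E2 (z + 1) = E2 z := by
  have : qexp (z + 1) = qexp z := by
    simp only [qexp]
    rw [mul_add, Complex.exp_add, mul_one, Complex.exp_two_pi_mul_I, mul_one]
  simp [E2, this]

lemma logder (f g : ℂ → ℂ) (ρ : ℂ) (a : ℕ) (hg : AnalyticAt ℂ g ρ) (hg0 : g ρ ≠ 0)
    (hf : ∀ᶠ z in 𝓝 ρ, f z = (z - ρ) ^ a * g z) :
    Tendsto (fun z => (z - ρ) * (deriv f z / f z)) (𝓝[≠] ρ) (𝓝 (a : ℂ)) ∧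
    Tendsto (fun z => (z - ρ) ^ 2 * (deriv (deriv f) z / f z)) (𝓝[≠] ρ)
      (𝓝 ((a : ℂ) * (a - 1))) := by
  have key : ∀ (u h : ℂ → ℂ), AnalyticAt ℂ h ρ → (∀ᶠ z in 𝓝 ρ, u z = (z - ρ) ^ a * h z) →
      ∀ᶠ z in 𝓝 ρ, HasDerivAt u (deriv u z) z ∧
        (z - ρ) * deriv u z = (z - ρ) ^ a * (a * h z + (z - ρ) * deriv h z) := by
    intro u h hh hu
    filter_upwards [hu.eventually_nhds, hh.eventually_analyticAt] with z hz hz2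
    have h1 : HasDerivAt (fun z => (z - ρ) ^ a * h z)
        ((a * (z - ρ) ^ (a - 1) * 1) * h z + (z - ρ) ^ a * deriv h z) z :=
      (((hasDerivAt_id z).sub_const ρ).pow a).mul hz2.differentiableAt.hasDerivAt
    have h2 : HasDerivAt u _ z := h1.congr_of_eventuallyEq hz
    refine ⟨h2.differentiableAt.hasDerivAt, ?_⟩
    rw [h2.deriv]
    rcases a with _ | a
    · simp
    · simp only [Nat.add_sub_cancel]
      ring
  have hid : AnalyticAt ℂ (fun z : ℂ => z - ρ) ρ := by fun_prop
  set h : ℂ → ℂ := fun z => a * g z + (z - ρ) * deriv g z with hh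
  have hA : AnalyticAt ℂ h ρ := by
    exact (analyticAt_const.mul hg).add (hid.mul hg.deriv)
  have k1 := key f g hg hf
  have k2 := key (fun z => (z - ρ) * deriv f z) h hA (k1.mono fun z hz => hz.2)
  have hgne : ∀ᶠ z in 𝓝 ρ, g z ≠ 0 := hg.continuousAt.eventually_ne hg0
  have hfa : AnalyticAt ℂ f ρ := by
    refine AnalyticAt.congr (f := fun z => (z - ρ) ^ a * g z) ((hid.pow a).mul hg) ?_
    filter_upwards [hf] with z hz using hz.symm
  constructor
  · have hlim : Tendsto (fun z => h z / g z) (𝓝[≠] ρ) (𝓝 (h ρ / g ρ)) :=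
      ((hA.continuousAt.div hg.continuousAt hg0).tendsto).mono_left nhdsWithin_le_nhds
    have e : h ρ / g ρ = a := by simp [hh, hg0]
    rw [e] at hlim
    refine hlim.congr' ?_
    filter_upwards [nhdsWithin_le_nhds k1, nhdsWithin_le_nhds hf, nhdsWithin_le_nhds hgne,
      self_mem_nhdsWithin] with z h1 h2 h3 h4
    have h5 : z - ρ ≠ 0 := sub_ne_zero.mpr h4
    rw [← mul_div_assoc, h1.2, h2, mul_div_mul_left _ _ (pow_ne_zero a h5)]
  · have hlim : Tendsto (fun z => (a * h z + (z - ρ) * deriv h z - h z) / g z) (𝓝[≠] ρ)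
        (𝓝 ((a * h ρ + (ρ - ρ) * deriv h ρ - h ρ) / g ρ)) := by
      have hq : AnalyticAt ℂ (fun z => a * h z + (z - ρ) * deriv h z - h z) ρ :=
        ((analyticAt_const.mul hA).add (hid.mul hA.deriv)).sub hA
      exact ((hq.continuousAt.div hg.continuousAt hg0).tendsto).mono_left nhdsWithin_le_nhds
    have e : (a * h ρ + (ρ - ρ) * deriv h ρ - h ρ) / g ρ = (a : ℂ) * (a - 1) := by
      simp only [hh, sub_self, zero_mul, add_zero]
      field_simp
    rw [e] at hlim
    refine hlim.congr' ?_
    filter_upwards [nhdsWithin_le_nhds k1, nhdsWithin_le_nhds k2, nhdsWithin_le_nhds hf,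
      nhdsWithin_le_nhds hgne, self_mem_nhdsWithin,
      nhdsWithin_le_nhds hfa.deriv.eventually_analyticAt] with z h1 h2 h3 h3' h4 h6
    have h5 : z - ρ ≠ 0 := sub_ne_zero.mpr h4
    have h7 : HasDerivAt (fun z => (z - ρ) * deriv f z)
        (1 * deriv f z + (z - ρ) * deriv (deriv f) z) z :=
      ((hasDerivAt_id z).sub_const ρ).mul h6.differentiableAt.hasDerivAt
    have h8 := h2.2
    rw [h7.deriv] at h8
    have h9 : (z - ρ) ^ 2 * deriv (deriv f) z
        = (z - ρ) ^ a * (a * h z + (z - ρ) * deriv h z - h z) := by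
      linear_combination h8 - h1.2
    rw [← mul_div_assoc, h9, h3, mul_div_mul_left _ _ (pow_ne_zero a h5)]

lemma Q_limit (f W g V : ℂ → ℂ) (ρ : ℂ) (a w : ℕ) (hg : AnalyticAt ℂ g ρ) (hg0 : g ρ ≠ 0)
    (hf : ∀ᶠ z in 𝓝 ρ, f z = (z - ρ) ^ a * g z)
    (hV : AnalyticAt ℂ V ρ) (hV0 : V ρ ≠ 0)
    (hW : ∀ᶠ z in 𝓝 ρ, W z = (z - ρ) ^ w * V z) :
    Tendsto (fun z => (z - ρ) ^ 2 * Qformula f W z) (𝓝[≠] ρ)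
      (𝓝 ((1 / 4 - ((2 * a - w - 1 : ℂ) / 2) ^ 2) / (4 * (Real.pi : ℂ) ^ 2))) := by
  obtain ⟨f1, f2⟩ := logder f g ρ a hg hg0 hf
  obtain ⟨w1, w2⟩ := logder W V ρ w hV hV0 hW
  have := (((f2.sub (f1.mul w1)).add ((w1.pow 2).const_mul (3 / 4))).sub
    (w2.const_mul (1 / 2))).const_mul (-(1 / (4 * (Real.pi : ℂ) ^ 2)))
  have hpi : (Real.pi : ℂ) ≠ 0 := by exact_mod_cast Real.pi_ne_zero
  convert this using 1
  · funext z
    simp only [Qformula]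
    ring
  · congr 1
    ring

lemma order_eq (A A0 γ m l : ℂ → ℂ) (ρ : ℂ) (s : ℕ) (hA0 : AnalyticAt ℂ A0 ρ) (h0 : A0 ρ ≠ 0)
    (hA : ∀ᶠ z in 𝓝 ρ, A z = (z - ρ) ^ s * A0 z)
    (hγ : ContinuousAt γ ρ) (hγρ : γ ρ = ρ) (hm : ContinuousAt m ρ) (hl : ContinuousAt l ρ)
    (h1 : ∀ᶠ z in 𝓝 ρ, γ z - ρ = (z - ρ) * l z)
    (h2 : ∀ᶠ z in 𝓝 ρ, A (γ z) = m z * A z) : l ρ ^ s = m ρ := by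
  have ht : Tendsto γ (𝓝 ρ) (𝓝 ρ) := by
    have := hγ.tendsto
    rwa [hγρ] at this
  have hAg := ht.eventually hA
  have hc1 : ContinuousAt (fun z => l z ^ s * A0 (γ z)) ρ := by
    refine (hl.pow s).mul (ContinuousAt.comp (g := A0) (f := γ) ?_ hγ)
    rw [hγρ]
    exact hA0.continuousAt
  have hc2 : ContinuousAt (fun z => m z * A0 z) ρ := hm.mul hA0.continuousAt
  have heq : ∀ᶠ z in 𝓝[≠] ρ, l z ^ s * A0 (γ z) = m z * A0 z := by
    filter_upwards [nhdsWithin_le_nhds hA, nhdsWithin_le_nhds hAg, nhdsWithin_le_nhds h1,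
      nhdsWithin_le_nhds h2, self_mem_nhdsWithin] with z e1 e2 e3 e4 e5
    have e6 : z - ρ ≠ 0 := sub_ne_zero.mpr e5
    rw [e1, e2, e3, mul_pow] at e4
    apply mul_left_cancel₀ (pow_ne_zero s e6)
    linear_combination e4
  have := tendsto_nhds_unique ((hc1.tendsto.mono_left nhdsWithin_le_nhds).congr' heq)
    (hc2.tendsto.mono_left (nhdsWithin_le_nhds (s := {ρ}ᶜ)))
  simp only [hγρ] at this
  exact mul_right_cancel₀ h0 this

lemma UHP_open : IsOpen UHP := isOpen_lt continuous_const Complex.continuous_im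

lemma local_lim (f W A B A0 B0 : ℂ → ℂ) (δ ρ : ℂ) (s t : ℕ) (hst : s ≠ t) (hδ : δ ≠ 0)
    (hA0 : AnalyticAt ℂ A0 ρ) (hB0 : AnalyticAt ℂ B0 ρ) (hA0' : A0 ρ ≠ 0) (hB0' : B0 ρ ≠ 0)
    (hA : ∀ᶠ z in 𝓝 ρ, A z = (z - ρ) ^ s * A0 z)
    (hB : ∀ᶠ z in 𝓝 ρ, B z = (z - ρ) ^ t * B0 z)
    (hf : ∀ᶠ z in 𝓝 ρ, f z = (A z - B z) / δ)
    (hW : ∀ᶠ z in 𝓝 ρ, W z = (deriv A z * B z - A z * deriv B z) / δ) :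
    Tendsto (fun z => (z - ρ) ^ 2 * Qformula f W z) (𝓝[≠] ρ)
      (𝓝 ((1 / 4 - ((((t : ℤ) - (s : ℤ) : ℤ) : ℂ) / 2) ^ 2) / (4 * (Real.pi : ℂ) ^ 2))) := by
  have hid : AnalyticAt ℂ (fun z : ℂ => z - ρ) ρ := by fun_prop
  have hAa : AnalyticAt ℂ A ρ := by
    refine AnalyticAt.congr (f := fun z => (z - ρ) ^ s * A0 z) ((hid.pow s).mul hA0) ?_
    filter_upwards [hA] with z hz using hz.symm
  have hBa : AnalyticAt ℂ B ρ := by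
    refine AnalyticAt.congr (f := fun z => (z - ρ) ^ t * B0 z) ((hid.pow t).mul hB0) ?_
    filter_upwards [hB] with z hz using hz.symm
  have hWa : AnalyticAt ℂ W ρ := by
    refine AnalyticAt.congr (f := fun z => (deriv A z * B z - A z * deriv B z) / δ)
      (((hAa.deriv.mul hBa).sub (hAa.mul hBa.deriv)).div analyticAt_const hδ) ?_
    filter_upwards [hW] with z hz using hz.symm
  obtain ⟨w, hw⟩ : ∃ w, s + t = w + 1 := ⟨s + t - 1, by omega⟩
  have hwC : (s : ℂ) + t = w + 1 := by exact_mod_cast hw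
  set V : ℂ → ℂ := fun z => ((s * A0 z + (z - ρ) * deriv A0 z) * B0 z
    - A0 z * (t * B0 z + (z - ρ) * deriv B0 z)) / δ with hVdef
  have hV : AnalyticAt ℂ V ρ :=
    ((((analyticAt_const.mul hA0).add (hid.mul hA0.deriv)).mul hB0).sub
      (hA0.mul ((analyticAt_const.mul hB0).add (hid.mul hB0.deriv)))).div analyticAt_const hδ
  have hV0 : V ρ ≠ 0 := by
    have : V ρ = ((s : ℂ) - t) * (A0 ρ * B0 ρ) / δ := by
      simp only [hVdef, sub_self, zero_mul, add_zero]
      ring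
    rw [this]
    have h : (s : ℂ) - t ≠ 0 := sub_ne_zero.mpr (by exact_mod_cast hst)
    exact div_ne_zero (mul_ne_zero h (mul_ne_zero hA0' hB0')) hδ
  have key : ∀ (a : ℕ) (u h : ℂ → ℂ), AnalyticAt ℂ h ρ →
      (∀ᶠ z in 𝓝 ρ, u z = (z - ρ) ^ a * h z) →
      ∀ᶠ z in 𝓝 ρ, 
        (z - ρ) * deriv u z = (z - ρ) ^ a * (a * h z + (z - ρ) * deriv h z) := by
    intro a u h hh hu
    filter_upwards [hu.eventually_nhds, hh.eventually_analyticAt] with z hz hz2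
    have h1 : HasDerivAt (fun z => (z - ρ) ^ a * h z)
        ((a * (z - ρ) ^ (a - 1) * 1) * h z + (z - ρ) ^ a * deriv h z) z :=
      (((hasDerivAt_id z).sub_const ρ).pow a).mul hz2.differentiableAt.hasDerivAt
    have h2 : HasDerivAt u _ z := h1.congr_of_eventuallyEq hz
    rw [h2.deriv]
    rcases a with _ | a
    · simp
    · simp only [Nat.add_sub_cancel]
      ring
  have hWV : ∀ᶠ z in 𝓝 ρ, W z = (z - ρ) ^ w * V z := by
    have hc : ContinuousAt (fun z => (z - ρ) ^ w * V z) ρ :=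
      ((hid.pow w).mul hV).continuousAt
    refine (hWa.continuousAt.eventuallyEq_nhds_iff_eventuallyEq_nhdsNE hc).mp ?_
    filter_upwards [nhdsWithin_le_nhds hA, nhdsWithin_le_nhds hB,
      nhdsWithin_le_nhds (key s A A0 hA0 hA), nhdsWithin_le_nhds (key t B B0 hB0 hB),
      nhdsWithin_le_nhds hW, self_mem_nhdsWithin] with z e1 e2 e3 e4 e5 e6
    have e7 : z - ρ ≠ 0 := sub_ne_zero.mpr e6
    apply mul_left_cancel₀ e7
    have e8 : (z - ρ) ^ s * (z - ρ) ^ t = (z - ρ) * (z - ρ) ^ w := by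
      rw [← pow_add, hw, pow_succ]
      ring
    rw [e5, hVdef]
    have e9 : (z - ρ) * (deriv A z * B z - A z * deriv B z) =
        (z - ρ) * (z - ρ) ^ w * ((s * A0 z + (z - ρ) * deriv A0 z) * B0 z
          - A0 z * (t * B0 z + (z - ρ) * deriv B0 z)) := by
      rw [← e8]
      linear_combination B z * e3 - A z * e4
        + ((z - ρ) ^ s * (s * A0 z + (z - ρ) * deriv A0 z)) * e2
        - ((z - ρ) ^ t * (t * B0 z + (z - ρ) * deriv B0 z)) * e1
    simp only []
    rw [← mul_div_assoc, e9]
    ring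
  rcases lt_or_gt_of_ne hst with h | h
  · obtain ⟨r, rfl⟩ : ∃ r, t = s + (r + 1) := ⟨t - s - 1, by omega⟩
    have hq := Q_limit f W (fun z => (A0 z - (z - ρ) ^ (r + 1) * B0 z) / δ) V ρ s w
      ((hA0.sub ((hid.pow (r + 1)).mul hB0)).div analyticAt_const hδ)
      (by simp [hA0', hδ])
      (by
        filter_upwards [hA, hB, hf] with z e1 e2 e3
        rw [e3, e1, e2, pow_add]
        ring) hV hV0 hWV
    convert hq using 2
    have : (w : ℂ) = 2 * s + r := by
      push_cast at hwC
      linear_combination -hwC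
    push_cast
    rw [this]
    ring
  · obtain ⟨r, rfl⟩ : ∃ r, s = t + (r + 1) := ⟨s - t - 1, by omega⟩
    have hq := Q_limit f W (fun z => ((z - ρ) ^ (r + 1) * A0 z - B0 z) / δ) V ρ t w
      ((((hid.pow (r + 1)).mul hA0).sub hB0).div analyticAt_const hδ)
      (by simp [hB0', hδ])
      (by
        filter_upwards [hA, hB, hf] with z e1 e2 e3
        rw [e3, e1, e2, pow_add]
        ring) hV hV0 hWV
    convert hq using 2
    have : (w : ℂ) = 2 * t + r := by
      push_cast at hwC
      linear_combination -hwC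
    push_cast
    rw [this]
    ring

lemma core (N b σ α c ρ ρ' : ℂ) (k : ℤ) (f f1 W : ℂ → ℂ) (S : Set ℂ)
    (hσ : σ ^ 2 = N) (hN : N ≠ 0) (hc : c ≠ 0) (hρ : ρ ∈ UHP) (hprod : N * ρ * ρ' = 1)
    (hsum : ρ + ρ' = b) (hne : ρ ≠ ρ')
    (hf : DifferentiableOn ℂ f UHP) (hf1 : DifferentiableOn ℂ f1 UHP)
    (hft : ∀ z ∈ UHP, f (b - 1 / (N * z)) = c * (σ * z) ^ k * (f z + α / z * f1 z))
    (hf1t : ∀ z ∈ UHP, f1 (b - 1 / (N * z)) = c * (σ * z) ^ (k - 2) * f1 z)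
    (hW : ∀ z, W z = -(f z) ^ 2 + α * (f1 z * deriv f z - deriv f1 z * f z))
    (hS : S = {z | z ∈ UHP ∧ f z ≠ 0 ∧ W z ≠ 0}) :
    ∃ d : ℤ, d ≠ 0 ∧ (N * ρ ^ 2) ^ (d - 1) = 1 ∧
      Tendsto (fun z => (z - ρ) ^ 2 * Qformula f W z) (𝓝[S \ {ρ}] ρ)
        (𝓝 ((1 / 4 - ((d : ℂ) / 2) ^ 2) / (4 * (Real.pi : ℂ) ^ 2))) := by
  have hnz : ∀ z ∈ UHP, z ≠ 0 := by
    rintro z hz rfl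
    simp [UHP] at hz
  have hρ0 := hnz ρ hρ
  have hρ'0 : ρ' ≠ 0 := by
    rintro rfl
    simp at hprod
  have hσ0 : σ ≠ 0 := by
    rintro rfl
    apply hN
    rw [← hσ]
    simp
  have hU : UHP ∈ 𝓝 ρ := UHP_open.mem_nhds hρ
  have hfa : AnalyticAt ℂ f ρ := hf.analyticAt hU
  have hf1a : AnalyticAt ℂ f1 ρ := hf1.analyticAt hU
  have hδ : ρ - ρ' ≠ 0 := sub_ne_zero.mpr hne
  -- the two eigenfunctions
  let P : ℂ → ℂ → ℂ := fun r z => (z - r) * f z + α * f1 z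
  have hPa : ∀ r, AnalyticAt ℂ (P r) ρ := fun r =>
    ((analyticAt_id.sub analyticAt_const).mul hfa).add (analyticAt_const.mul hf1a)
  have hPd : ∀ r, ∀ z ∈ UHP, deriv (P r) z = f z + (z - r) * deriv f z + α * deriv f1 z := by
    intro r z hz
    have h1 := (hf.differentiableAt (UHP_open.mem_nhds hz)).hasDerivAt
    have h2 := (hf1.differentiableAt (UHP_open.mem_nhds hz)).hasDerivAt
    have h3 : HasDerivAt (P r) _ z :=
      (((hasDerivAt_id z).sub_const r).mul h1).add (h2.const_mul α)
    rw [h3.deriv]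
    simp
  have hWP : ∀ᶠ z in 𝓝 ρ, W z
      = (deriv (P ρ') z * P ρ z - P ρ' z * deriv (P ρ) z) / (ρ - ρ') := by
    filter_upwards [hU] with z hz
    rw [hPd _ z hz, hPd _ z hz, hW, eq_div_iff hδ]
    simp only [P]
    ring
  have hfP : ∀ᶠ z in 𝓝 ρ, f z = (P ρ' z - P ρ z) / (ρ - ρ') := by
    filter_upwards with z
    rw [eq_div_iff hδ]
    simp only [P]
    ring
  have hbot : (∀ᶠ z in 𝓝 ρ, W z = 0) → 𝓝[S \ {ρ}] ρ = ⊥ := by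
    intro h
    rw [← Filter.empty_mem_iff_bot]
    filter_upwards [nhdsWithin_le_nhds h, self_mem_nhdsWithin] with z h1 h2
    have h3 := h2.1
    rw [hS] at h3
    exact h3.2.2 h1
  have htriv : (∀ᶠ z in 𝓝 ρ, W z = 0) → ∃ d : ℤ, d ≠ 0 ∧ (N * ρ ^ 2) ^ (d - 1) = 1 ∧
      Tendsto (fun z => (z - ρ) ^ 2 * Qformula f W z) (𝓝[S \ {ρ}] ρ)
        (𝓝 ((1 / 4 - ((d : ℂ) / 2) ^ 2) / (4 * (Real.pi : ℂ) ^ 2))) := by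
    intro h
    refine ⟨1, one_ne_zero, by simp, ?_⟩
    rw [hbot h]
    exact tendsto_bot
  by_cases hAt : analyticOrderAt (P ρ') ρ = ⊤
  · apply htriv
    rw [analyticOrderAt_eq_top] at hAt
    filter_upwards [hWP, hAt, hAt.eventually_nhds] with z h1 h2 h3
    have h4 : deriv (P ρ') z = 0 := by
      have : P ρ' =ᶠ[𝓝 z] fun _ => 0 := h3
      rw [this.deriv_eq]
      simp
    rw [h1, h2, h4]
    simp
  by_cases hBt : analyticOrderAt (P ρ) ρ = ⊤
  · apply htriv
    rw [analyticOrderAt_eq_top] at hBt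
    filter_upwards [hWP, hBt, hBt.eventually_nhds] with z h1 h2 h3
    have h4 : deriv (P ρ) z = 0 := by
      have : P ρ =ᶠ[𝓝 z] fun _ => 0 := h3
      rw [this.deriv_eq]
      simp
    rw [h1, h2, h4]
    simp
  obtain ⟨A0, hA0, hA0', hA⟩ := ((hPa ρ').analyticOrderAt_ne_top).mp hAt
  obtain ⟨B0, hB0, hB0', hB⟩ := ((hPa ρ).analyticOrderAt_ne_top).mp hBt
  simp only [smul_eq_mul] at hA hB
  set s := analyticOrderNatAt (P ρ') ρ
  set t := analyticOrderNatAt (P ρ) ρ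
  have hfix : ∀ r, r ≠ 0 → r = b - 1 / (N * r) → ∀ z ∈ UHP,
      P r (b - 1 / (N * z)) = (c * (σ * z) ^ k / (N * z * r)) * P r z := by
    intro r hr0 hr z hz
    have hz0 := hnz z hz
    have h1 : b - 1 / (N * z) - r = (z - r) / (N * z * r) := by
      have : b = r + 1 / (N * r) := by linear_combination -hr
      rw [this]
      field_simp
      ring
    simp only [P]
    rw [hft z hz, hf1t z hz, h1, zpow_sub₀ (mul_ne_zero hσ0 hz0)]
    have h2 : (σ * z) ^ (2 : ℤ) = N * z ^ 2 := by
      rw [← hσ]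
      norm_cast
      ring
    rw [h2]
    field_simp
    ring
  have hfρ : ρ = b - 1 / (N * ρ) := by
    have : 1 / (N * ρ) = ρ' := by
      rw [div_eq_iff (mul_ne_zero hN hρ0)]
      linear_combination -hprod
    rw [this, ← hsum]
    ring
  have hfρ' : ρ' = b - 1 / (N * ρ') := by
    have : 1 / (N * ρ') = ρ := by
      rw [div_eq_iff (mul_ne_zero hN hρ'0)]
      linear_combination -hprod
    rw [this, ← hsum]
    ring
  have hγc : ContinuousAt (fun z => b - 1 / (N * z)) ρ := by
    refine continuousAt_const.sub (continuousAt_const.div ?_ (mul_ne_zero hN hρ0))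
    fun_prop
  have hlc : ContinuousAt (fun z => 1 / (N * z * ρ)) ρ := by
    refine (continuousAt_const.div ?_ (mul_ne_zero (mul_ne_zero hN hρ0) hρ0))
    fun_prop
  have hmc : ∀ r, r ≠ 0 → ContinuousAt (fun z => c * (σ * z) ^ k / (N * z * r)) ρ := by
    intro r hr
    refine ContinuousAt.div (continuousAt_const.mul
      (ContinuousAt.zpow₀ (by fun_prop) k (Or.inl (mul_ne_zero hσ0 hρ0)))) (by fun_prop)
      (mul_ne_zero (mul_ne_zero hN hρ0) hr)
  have hl1 : ∀ᶠ z in 𝓝 ρ, (b - 1 / (N * z)) - ρ = (z - ρ) * (1 / (N * z * ρ)) := by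
    filter_upwards [hU] with z hz
    have hz0 := hnz z hz
    have : b = ρ + 1 / (N * ρ) := by linear_combination -hfρ
    rw [this]
    field_simp
    ring
  have hs := order_eq (P ρ') A0 (fun z => b - 1 / (N * z))
    (fun z => c * (σ * z) ^ k / (N * z * ρ')) (fun z => 1 / (N * z * ρ)) ρ s hA0 hA0' hA
    hγc hfρ.symm (hmc ρ' hρ'0) hlc hl1
    (by filter_upwards [hU] with z hz using hfix ρ' hρ'0 hfρ' z hz)
  have ht := order_eq (P ρ) B0 (fun z => b - 1 / (N * z))
    (fun z => c * (σ * z) ^ k / (N * z * ρ)) (fun z => 1 / (N * z * ρ)) ρ t hB0 hB0' hB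
    hγc hfρ.symm (hmc ρ hρ0) hlc hl1
    (by filter_upwards [hU] with z hz using hfix ρ hρ0 hfρ z hz)
  have hx0 : N * ρ ^ 2 ≠ 0 := mul_ne_zero hN (pow_ne_zero 2 hρ0)
  have hxx : N * ρ * ρ = N * ρ ^ 2 := by ring
  rw [hprod, div_one, hxx] at hs
  rw [hxx] at ht
  have hd : (N * ρ ^ 2) ^ (((t : ℤ) - (s : ℤ)) - 1) = 1 := by
    rw [zpow_sub₀ hx0, zpow_sub₀ hx0, zpow_natCast, zpow_natCast, zpow_one]
    have hs' : 1 = c * (σ * ρ) ^ k * (N * ρ ^ 2) ^ s := by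
      rw [← hs, one_div, inv_pow, inv_mul_cancel₀ (pow_ne_zero s hx0)]
    have ht' : N * ρ ^ 2 = c * (σ * ρ) ^ k * (N * ρ ^ 2) ^ t := by
      have h5 : c * (σ * ρ) ^ k = (1 / (N * ρ ^ 2)) ^ t * (N * ρ ^ 2) := by
        rw [ht, div_mul_cancel₀ _ hx0]
      rw [h5, one_div, inv_pow, mul_right_comm, inv_mul_cancel₀ (pow_ne_zero t hx0), one_mul]
    have hC : c * (σ * ρ) ^ k ≠ 0 := mul_ne_zero hc (zpow_ne_zero k (mul_ne_zero hσ0 hρ0))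
    rw [div_div, div_eq_one_iff_eq (mul_ne_zero (pow_ne_zero s hx0) hx0)]
    apply mul_left_cancel₀ hC
    rw [← ht', ← mul_assoc, ← hs', one_mul]
  have hd0 : (t : ℤ) - s ≠ 0 := by
    intro h
    rw [h] at hd
    simp only [zero_sub, _root_.zpow_neg, zpow_one, inv_eq_one] at hd
    apply hne
    have h1 : (N * ρ) * (ρ - ρ') = 0 := by linear_combination hd - hprod
    rcases mul_eq_zero.mp h1 with h2 | h2
    · exact absurd h2 (mul_ne_zero hN hρ0)
    · exact sub_eq_zero.mp h2
  refine ⟨(t : ℤ) - s, hd0, hd, ?_⟩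
  have hfin := local_lim f W (P ρ') (P ρ) A0 B0 (ρ - ρ') ρ s t (by omega) hδ hA0 hB0 hA0' hB0'
    hA hB hfP hWP
  refine hfin.mono_left (nhdsWithin_mono ρ ?_)
  rintro z ⟨_, hz⟩
  exact hz

lemma core2 (N : ℕ) (D b σ α c ρ ρ' : ℂ) (k : ℤ) (f f0 f1 W : ℂ → ℂ) (S : Set ℂ)
    (hσ : σ ^ 2 = (N : ℂ)) (hN : N ≠ 0) (hD : D ≠ 0) (hb : b = 0 ∨ b = 1)
    (hα : α = 12 / (D * ((Real.pi : ℂ) * Complex.I)))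
    (hc : c ≠ 0) (hρ : ρ ∈ UHP) (hprod : (N : ℂ) * ρ * ρ' = 1)
    (hsum : ρ + ρ' = b) (hne : ρ ≠ ρ')
    (hf0 : DifferentiableOn ℂ f0 UHP) (hf1 : DifferentiableOn ℂ f1 UHP)
    (hf0t : ∀ z ∈ UHP, f0 (b - 1 / (N * z)) = c * (σ * z) ^ k * f0 z)
    (hf1t : ∀ z ∈ UHP, f1 (b - 1 / (N * z)) = c * (σ * z) ^ (k - 2) * f1 z)
    (hf : ∀ z, f z = f0 z + (N * E2 (N * z) + E2 z) / D * f1 z)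
    (hW : ∀ z, W z = -(f z) ^ 2 + α * (f1 z * deriv f z - deriv f1 z * f z))
    (hS : S = {z | z ∈ UHP ∧ f z ≠ 0 ∧ W z ≠ 0}) :
    ∃ d : ℤ, d ≠ 0 ∧ ((N : ℂ) * ρ ^ 2) ^ (d - 1) = 1 ∧
      Tendsto (fun z => (z - ρ) ^ 2 * Qformula f W z) (𝓝[S \ {ρ}] ρ)
        (𝓝 ((1 / 4 - ((d : ℂ) / 2) ^ 2) / (4 * (Real.pi : ℂ) ^ 2))) := by
  have hN' : (N : ℂ) ≠ 0 := by exact_mod_cast hN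
  have hσ0 : σ ≠ 0 := by
    rintro rfl
    apply hN'
    rw [← hσ]
    simp
  have hpi : (Real.pi : ℂ) ≠ 0 := by exact_mod_cast Real.pi_ne_zero
  have hmul : ∀ z ∈ UHP, (N : ℂ) * z ∈ UHP := by
    intro z hz
    simp only [UHP, Set.mem_ofPred_eq] at hz ⊢
    simp only [Complex.mul_im, Complex.natCast_re, Complex.natCast_im, zero_mul, add_zero]
    exact mul_pos (by exact_mod_cast Nat.pos_of_ne_zero hN) hz
  have hTn : ∀ (n : ℕ) (z : ℂ), E2 (z + n) = E2 z := by
    intro n z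
    induction n with
    | zero => simp
    | succ n ih =>
      push_cast
      rw [← add_assoc, E2_T, ih]
  have hfd : DifferentiableOn ℂ f UHP := by
    have h1 : DifferentiableOn ℂ (fun z => E2 ((N : ℂ) * z)) UHP :=
      E2_diff.comp (by fun_prop) hmul
    have h2 : DifferentiableOn ℂ
        (fun z => f0 z + (N * E2 (N * z) + E2 z) / D * f1 z) UHP :=
      hf0.add ((((h1.const_mul (N : ℂ)).add E2_diff).div_const D).mul hf1)
    exact h2.congr fun z _ => hf z
  refine core (N : ℂ) b σ α c ρ ρ' k f f1 W S hσ hN' hc hρ hprod hsum hne hfd hf1 ?_ hf1t hW hS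
  intro z hz
  have hz0 : z ≠ 0 := by
    rintro rfl
    simp [UHP] at hz
  have hE1 : E2 (N * (b - 1 / (N * z))) = E2 (-1 / z) := by
    have e : (N : ℂ) * (b - 1 / (N * z)) = -1 / z + N * b := by
      field_simp
      ring
    rw [e]
    rcases hb with rfl | rfl
    · simp
    · rw [mul_one, hTn]
  have hE2 : E2 (b - 1 / (N * z)) = E2 (-1 / (N * z)) := by
    rcases hb with rfl | rfl
    · congr 1
      ring
    · rw [← E2_T (-1 / (N * z))]
      congr 1
      ring
  rw [hf, hf0t z hz, hf1t z hz, hE1, hE2, E2_S z hz, E2_S _ (hmul z hz), hf z,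
    zpow_sub₀ (mul_ne_zero hσ0 hz0), hα]
  have h2 : (σ * z) ^ (2 : ℤ) = N * z ^ 2 := by
    rw [← hσ]
    norm_cast
    ring
  rw [h2]
  field_simp
  ring

lemma odd_of (d : ℤ) (h : (-1 : ℂ) ^ (d - 1) = 1) : Odd d := by
  rcases Int.even_or_odd d with h1 | h1
  · have h2 : Odd (d - 1) := h1.sub_odd odd_one
    rw [h2.neg_one_zpow] at h
    norm_num at h
  · exact h1

lemma odd_abs (d : ℤ) (h0 : d ≠ 0) : 1 ≤ |d| := Int.one_le_abs h0

lemma abs_sq (d : ℤ) : (((|d| : ℤ) : ℂ) / 2) ^ 2 = ((d : ℂ) / 2) ^ 2 := by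
  have : ((|d| : ℤ) : ℂ) ^ 2 = (d : ℂ) ^ 2 := by exact_mod_cast sq_abs d
  rw [div_pow, div_pow, this]

lemma gcd_of (x : ℂ) (hx : x ^ 2 - x + 1 = 0) (d : ℤ) (h : x ^ (d - 1) = 1) :
    Int.gcd d 6 = 1 := by
  have h3 : x ^ 3 = -1 := by linear_combination (x + 1) * hx
  have hx0 : x ≠ 0 := by
    rintro rfl
    norm_num at hx
  have h6 : x ^ (6 : ℤ) = 1 := by
    have : x ^ 6 = 1 := by linear_combination (x ^ 3 - 1) * h3
    exact_mod_cast this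
  have hdiv : x ^ ((d - 1) % 6) = 1 := by
    rw [← Int.emod_add_mul_ediv (d - 1) 6, zpow_add₀ hx0, _root_.zpow_mul, h6, _root_.one_zpow, mul_one] at h
    exact h
  have hlt := Int.emod_lt_of_pos (d - 1) (by norm_num : (0 : ℤ) < 6)
  have hge := Int.emod_nonneg (d - 1) (by norm_num : (6 : ℤ) ≠ 0)
  have hmod : (d - 1) % 6 = 0 := by
    generalize (d - 1) % 6 = e at *
    have hn1 : x ≠ 1 := by
      rintro rfl
      norm_num at hx
    interval_cases e
    · rfl
    · exfalso
      rw [zpow_one] at hdiv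
      exact hn1 hdiv
    · exfalso
      have h2 : x ^ 2 = 1 := by exact_mod_cast hdiv
      have : x = 2 := by linear_combination h2 - hx
      rw [this] at h2
      norm_num at h2
    · exfalso
      have h2 : x ^ 3 = 1 := by exact_mod_cast hdiv
      rw [h3] at h2
      norm_num at h2
    · exfalso
      have h2 : x ^ 4 = 1 := by exact_mod_cast hdiv
      have : x = -1 := by linear_combination x * h3 - h2
      rw [this] at hx
      norm_num at hx
    · exfalso
      have h2 : x ^ 5 = 1 := by exact_mod_cast hdiv
      apply hn1
      linear_combination (x ^ 3 - 1) * h3 - x * h2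
  have : d = 6 * ((d - 1) / 6) + 1 := by omega
  rw [this]
  simp

def Tz : SL2Z := ⟨!![1, 1; 0, 1], by simp [Matrix.det_fin_two_of]⟩

lemma T_mem (N : ℕ) : toR Tz ∈ Gamma0R N := by
  refine ⟨Tz, ?_, rfl⟩
  show Tz ∈ CongruenceSubgroup.Gamma0 N
  rw [CongruenceSubgroup.Gamma0_mem]
  simp [Tz]

lemma T_val : (toR Tz).1 = !![1, 1; 0, 1] := by
  ext i j
  change ((Tz.1 i j : ℤ) : ℝ) = _
  fin_cases i <;> fin_cases j <;> simp [Tz]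

lemma R3_eq : R3elt = toR Tz * S3elt := by
  apply Subtype.ext
  change R3elt.1 = (toR Tz).1 * S3elt.1
  rw [T_val]
  have h3 : Real.sqrt 3 ≠ 0 := by positivity
  ext i j
  fin_cases i <;> fin_cases j <;> simp [R3elt, S3elt, Matrix.mul_apply, Fin.sum_univ_two]

lemma S3_mem : S3elt ∈ GammaPlus3 := Subgroup.subset_closure (Or.inr rfl)

lemma R3_mem : R3elt ∈ GammaPlus3 := by
  rw [R3_eq]
  exact mul_mem (Subgroup.subset_closure (Or.inl (T_mem 3))) S3_mem

lemma sq_sqrt3 : ((Real.sqrt 3 : ℝ) : ℂ) ^ 2 = 3 := by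
  exact_mod_cast Real.sq_sqrt (by norm_num : (0 : ℝ) ≤ 3)

lemma sq_sqrt2 : ((Real.sqrt 2 : ℝ) : ℂ) ^ 2 = 2 := by
  exact_mod_cast Real.sq_sqrt (by norm_num : (0 : ℝ) ≤ 2)

lemma S3_act {χ : SL2R → ℂ} {k : ℤ} {g : ℂ → ℂ} (hg : MFchar GammaPlus3 χ k g) (z : ℂ)
    (hz : z ∈ UHP) :
    g (0 - 1 / ((3 : ℕ) * z)) = χ S3elt * ((Real.sqrt 3 : ℂ) * z) ^ k * g z := by
  have h := hg.2.1 S3elt S3_mem z hz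
  have hz0 : z ≠ 0 := by
    rintro rfl
    simp [UHP] at hz
  have h3 : ((Real.sqrt 3 : ℝ) : ℂ) ≠ 0 := by
    intro h
    have := sq_sqrt3
    rw [h] at this
    norm_num at this
  have e : moeb S3elt z = 0 - 1 / ((3 : ℕ) * z) := by
    simp only [moeb, S3elt]
    simp
    field_simp
    rw [sq_sqrt3]
  have e2 : jfac S3elt z = (Real.sqrt 3 : ℂ) * z := by
    simp [jfac, S3elt]
  rw [e, e2] at h
  exact h

lemma R3_act {χ : SL2R → ℂ} {k : ℤ} {g : ℂ → ℂ} (hg : MFchar GammaPlus3 χ k g) (z : ℂ)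
    (hz : z ∈ UHP) :
    g (1 - 1 / ((3 : ℕ) * z)) = χ R3elt * ((Real.sqrt 3 : ℂ) * z) ^ k * g z := by
  have h := hg.2.1 R3elt R3_mem z hz
  have hz0 : z ≠ 0 := by
    rintro rfl
    simp [UHP] at hz
  have h3 : ((Real.sqrt 3 : ℝ) : ℂ) ≠ 0 := by
    intro h
    have := sq_sqrt3
    rw [h] at this
    norm_num at this
  have e : moeb R3elt z = 1 - 1 / ((3 : ℕ) * z) := by
    simp only [moeb, R3elt]
    simp
    field_simp
    rw [sq_sqrt3]
    ring
  have e2 : jfac R3elt z = (Real.sqrt 3 : ℂ) * z := by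
    simp [jfac, R3elt]
  rw [e, e2] at h
  exact h

lemma S2_act {ε : ℂ} {k : ℤ} {g : ℂ → ℂ} (hg : g ∈ MFplus2 ε k) (z : ℂ)
    (hz : z ∈ UHP) :
    g (0 - 1 / ((2 : ℕ) * z)) = ε * ((Real.sqrt 2 : ℂ) * z) ^ k * g z := by
  have h := hg.2 z hz
  have hz0 : z ≠ 0 := by
    rintro rfl
    simp [UHP] at hz
  have h2 : ((Real.sqrt 2 : ℝ) : ℂ) ≠ 0 := by
    intro h
    have := sq_sqrt2
    rw [h] at this
    norm_num at this
  have e : 0 - 1 / (((2 : ℕ) : ℂ) * z) = -1 / (2 * z) := by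
    push_cast
    ring
  have hne : ((Real.sqrt 2 : ℂ) * z) ^ k ≠ 0 := zpow_ne_zero k (mul_ne_zero h2 hz0)
  rw [e]
  rw [_root_.zpow_neg, inv_mul_eq_iff_eq_mul₀ hne] at h
  rw [h]
  ring

lemma R2_act {ε : ℂ} {k : ℤ} {g : ℂ → ℂ} (hg : g ∈ MFplus2 ε k) (z : ℂ)
    (hz : z ∈ UHP) :
    g (1 - 1 / ((2 : ℕ) * z)) = ε * ((Real.sqrt 2 : ℂ) * z) ^ k * g z := by
  rw [← S2_act hg z hz]
  have hw : 0 - 1 / (((2 : ℕ) : ℂ) * z) ∈ UHP := by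
    simp only [UHP, Set.mem_ofPred_eq] at hz ⊢
    have hz0 : z ≠ 0 := by
      rintro rfl
      simp at hz
    have e : 0 - 1 / (((2 : ℕ) : ℂ) * z) = ((2⁻¹ : ℝ) : ℂ) * (-z⁻¹) := by
      push_cast
      field_simp
      ring
    rw [e, Complex.im_ofReal_mul, Complex.neg_im, Complex.inv_im, neg_div, neg_neg]
    have := Complex.normSq_pos.mpr hz0
    positivity
  have h := hg.1.transform (toR Tz) (T_mem 2) _ hw
  have e1 : ∀ w, moeb (toR Tz) w = w + 1 := by
    intro w
    simp [moeb, T_val]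
  have e2 : ∀ w, jfac (toR Tz) w = 1 := by
    intro w
    simp [jfac, T_val]
  rw [e1, e2] at h
  rw [_root_.one_zpow, one_mul, one_mul] at h
  rw [← h]
  congr 1
  ring

end LE

/-- local exponents of `y″ = -4π² Q_f y` at the elliptic points of
`Γ₀⁺(2)` (part (ii)) and of `Γ₀⁺(3)` (part (iii)). -/
theorem local_exponents_elliptic_Gamma0plus2_and_3 :
    -- Part (ii): Γ₀⁺(2)
    (∀ (k : ℤ), 0 < k → Even k → ∀ ε : ℂ, (ε = 1 ∨ ε = -1) →
      ∀ f₀ ∈ MFplus2 ε k, ∀ f₁ ∈ MFplus2 ε (k - 2), (∃ z ∈ UHP, f₁ z ≠ 0) →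
      ∀ f W Q : ℂ → ℂ,
        (∀ z, f z = f₀ z + (2 * E2 (2 * z) + E2 z) / 3 * f₁ z) →
        (∀ z, W z = -(f z) ^ 2 + (4 / ((Real.pi : ℂ) * Complex.I)) *
          (f₁ z * deriv f z - deriv f₁ z * f z)) →
        (∀ z, Q z = Qformula f W z) →
        ∀ S : Set ℂ, S = {z | z ∈ UHP ∧ f z ≠ 0 ∧ W z ≠ 0} →
        ∃ n₁ n₂ : ℤ, 1 ≤ n₁ ∧ 1 ≤ n₂ ∧ Odd n₁ ∧ Odd n₂ ∧
          Tendsto (fun z : ℂ => (z - ((Real.sqrt 2 : ℂ))⁻¹ * Complex.I) ^ 2 * Q z)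
            (𝓝[S \ {((Real.sqrt 2 : ℂ))⁻¹ * Complex.I}] (((Real.sqrt 2 : ℂ))⁻¹ * Complex.I))
            (𝓝 ((1 / 4 - ((n₁ : ℂ) / 2) ^ 2) / (4 * (Real.pi : ℂ) ^ 2))) ∧
          Tendsto (fun z : ℂ => (z - (1 + Complex.I) / 2) ^ 2 * Q z)
            (𝓝[S \ {(1 + Complex.I) / 2}] ((1 + Complex.I) / 2))
            (𝓝 ((1 / 4 - ((n₂ : ℂ) / 2) ^ 2) / (4 * (Real.pi : ℂ) ^ 2)))) ∧
    -- Part (iii): Γ₀⁺(3)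
    (∀ χ : SL2R → ℂ,
      (∀ γ ∈ GammaPlus3, ∀ δ ∈ GammaPlus3, χ (γ * δ) = χ γ * χ δ) →
      χ S3elt = -Complex.I → χ R3elt = -Complex.I →
      ∀ m : ℕ, m ≤ 3 → ∀ k : ℤ, 0 < k → (2 : ℤ) ∣ (k - m) →
      ∀ f₀ f₁ : ℂ → ℂ,
        MFchar GammaPlus3 (fun γ => χ γ ^ m) k f₀ →
        MFchar GammaPlus3 (fun γ => χ γ ^ m) (k - 2) f₁ →
        (∃ z ∈ UHP, f₁ z ≠ 0) →
      ∀ f W Q : ℂ → ℂ,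
        (∀ z, f z = f₀ z + (3 * E2 (3 * z) + E2 z) / 4 * f₁ z) →
        (∀ z, W z = -(f z) ^ 2 + (3 / ((Real.pi : ℂ) * Complex.I)) *
          (f₁ z * deriv f z - deriv f₁ z * f z)) →
        (∀ z, Q z = Qformula f W z) →
        ∀ S : Set ℂ, S = {z | z ∈ UHP ∧ f z ≠ 0 ∧ W z ≠ 0} →
        ∃ n₁ n₂ : ℤ, 1 ≤ n₁ ∧ 1 ≤ n₂ ∧ Odd n₁ ∧ Int.gcd n₂ 6 = 1 ∧
          Tendsto (fun z : ℂ => (z - ((Real.sqrt 3 : ℂ))⁻¹ * Complex.I) ^ 2 * Q z)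
            (𝓝[S \ {((Real.sqrt 3 : ℂ))⁻¹ * Complex.I}] (((Real.sqrt 3 : ℂ))⁻¹ * Complex.I))
            (𝓝 ((1 / 4 - ((n₁ : ℂ) / 2) ^ 2) / (4 * (Real.pi : ℂ) ^ 2))) ∧
          Tendsto (fun z : ℂ => (z - (3 + Real.sqrt 3 * Complex.I) / 6) ^ 2 * Q z)
            (𝓝[S \ {(3 + Real.sqrt 3 * Complex.I) / 6}] ((3 + Real.sqrt 3 * Complex.I) / 6))
            (𝓝 ((1 / 4 - ((n₂ : ℂ) / 2) ^ 2) / (4 * (Real.pi : ℂ) ^ 2)))) := by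
  have s2 := LE.sq_sqrt2
  have s3 := LE.sq_sqrt3
  have hI := Complex.I_sq
  have hpi : (Real.pi : ℂ) ≠ 0 := by exact_mod_cast Real.pi_ne_zero
  have h20 : ((Real.sqrt 2 : ℝ) : ℂ) ≠ 0 := by
    intro h
    rw [h] at s2
    norm_num at s2
  have h30 : ((Real.sqrt 3 : ℝ) : ℂ) ≠ 0 := by
    intro h
    rw [h] at s3
    norm_num at s3
  have hneI : ∀ (a b : ℂ), b ≠ 0 → a + b * Complex.I ≠ a - b * Complex.I := by
    intro a b hb h
    have : b * (2 * Complex.I) = 0 := by linear_combination h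
    simp [hb] at this
  have p2 : (0 : ℝ) < Real.sqrt 2 := by positivity
  have p3 : (0 : ℝ) < Real.sqrt 3 := by positivity
  constructor
  · intro k hk hke ε hε f₀ hf₀ f₁ hf₁ _ f W Q hf hW hQ S hS
    obtain rfl : Q = Qformula f W := funext hQ
    have hε0 : ε ≠ 0 := by
      rcases hε with rfl | rfl <;> norm_num
    have hf' : ∀ z, f z = f₀ z + (((2 : ℕ) : ℂ) * E2 (((2 : ℕ) : ℂ) * z) + E2 z) / 3 * f₁ z := by
      intro z
      rw [hf z]
      push_cast
      rfl
    have hα : 4 / ((Real.pi : ℂ) * Complex.I) = 12 / (3 * ((Real.pi : ℂ) * Complex.I)) := by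
      field_simp
      norm_num
    obtain ⟨d₁, h10, h11, h12⟩ := LE.core2 2 3 0 (Real.sqrt 2) (4 / ((Real.pi : ℂ) * Complex.I)) ε
      (((Real.sqrt 2 : ℂ))⁻¹ * Complex.I) (-(((Real.sqrt 2 : ℂ))⁻¹ * Complex.I)) k f f₀ f₁ W S
      (by rw [s2]; norm_num) (by norm_num) (by norm_num) (Or.inl rfl) hα hε0
      (by
        have : ((Real.sqrt 2 : ℂ))⁻¹ * Complex.I = (((Real.sqrt 2)⁻¹ : ℝ) : ℂ) * Complex.I := by
          push_cast
          rfl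
        rw [this]
        simp [UHP])
      (by
        push_cast
        field_simp
        rw [s2, hI]
        norm_num)
      (by ring)
      (by
        have := hneI 0 ((Real.sqrt 2 : ℂ))⁻¹ (inv_ne_zero h20)
        simpa using this)
      hf₀.1.holo hf₁.1.holo (LE.S2_act hf₀) (LE.S2_act hf₁) hf' hW hS
    obtain ⟨d₂, h20, h21, h22⟩ := LE.core2 2 3 1 (Real.sqrt 2) (4 / ((Real.pi : ℂ) * Complex.I)) ε
      ((1 + Complex.I) / 2) ((1 - Complex.I) / 2) k f f₀ f₁ W S
      (by rw [s2]; norm_num) (by norm_num) (by norm_num) (Or.inr rfl) hα hε0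
      (by simp [UHP])
      (by
        push_cast
        linear_combination -hI / 2)
      (by ring)
      (by
        have := hneI (1 / 2) (1 / 2) (by norm_num)
        intro h
        apply this
        linear_combination h)
      hf₀.1.holo hf₁.1.holo (LE.R2_act hf₀) (LE.R2_act hf₁) hf' hW hS
    refine ⟨|d₁|, |d₂|, LE.odd_abs _ h10, LE.odd_abs _ h20, ?_, ?_, ?_, ?_⟩
    · rw [odd_abs]
      apply LE.odd_of
      have e : ((2 : ℕ) : ℂ) * (((Real.sqrt 2 : ℂ))⁻¹ * Complex.I) ^ 2 = -1 := by
        rw [mul_pow, inv_pow, s2, hI]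
        norm_num
      rw [e] at h11
      exact h11
    · rw [odd_abs]
      apply LE.odd_of
      have e : ((2 : ℕ) : ℂ) * ((1 + Complex.I) / 2) ^ 2 = Complex.I := by
        push_cast
        linear_combination hI / 2
      rw [e] at h21
      rw [← hI, ← zpow_natCast, ← _root_.zpow_mul, mul_comm, _root_.zpow_mul, h21, _root_.one_zpow]
    · rw [LE.abs_sq]
      exact h12
    · rw [LE.abs_sq]
      exact h22
  · intro χ _ hχS hχR m _ k _ _ f₀ f₁ hf₀ hf₁ _ f W Q hf hW hQ S hS
    obtain rfl : Q = Qformula f W := funext hQ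
    have hf' : ∀ z, f z = f₀ z + (((3 : ℕ) : ℂ) * E2 (((3 : ℕ) : ℂ) * z) + E2 z) / 4 * f₁ z := by
      intro z
      rw [hf z]
      push_cast
      rfl
    have hα : 3 / ((Real.pi : ℂ) * Complex.I) = 12 / (4 * ((Real.pi : ℂ) * Complex.I)) := by
      field_simp
      norm_num
    obtain ⟨d₁, h10, h11, h12⟩ := LE.core2 3 4 0 (Real.sqrt 3) (3 / ((Real.pi : ℂ) * Complex.I))
      (χ S3elt ^ m)
      (((Real.sqrt 3 : ℂ))⁻¹ * Complex.I) (-(((Real.sqrt 3 : ℂ))⁻¹ * Complex.I)) k f f₀ f₁ W S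
      (by rw [s3]; norm_num) (by norm_num) (by norm_num) (Or.inl rfl) hα
      (by
        rw [hχS]
        exact pow_ne_zero m (neg_ne_zero.mpr Complex.I_ne_zero))
      (by
        have : ((Real.sqrt 3 : ℂ))⁻¹ * Complex.I = (((Real.sqrt 3)⁻¹ : ℝ) : ℂ) * Complex.I := by
          push_cast
          rfl
        rw [this]
        simp [UHP])
      (by
        push_cast
        field_simp
        rw [s3, hI]
        norm_num)
      (by ring)
      (by
        have := hneI 0 ((Real.sqrt 3 : ℂ))⁻¹ (inv_ne_zero h30)
        simpa using this)
      hf₀.1 hf₁.1 (LE.S3_act hf₀) (LE.S3_act hf₁) hf' hW hS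
    obtain ⟨d₂, h20, h21, h22⟩ := LE.core2 3 4 1 (Real.sqrt 3) (3 / ((Real.pi : ℂ) * Complex.I))
      (χ R3elt ^ m)
      ((3 + Real.sqrt 3 * Complex.I) / 6) ((3 - Real.sqrt 3 * Complex.I) / 6) k f f₀ f₁ W S
      (by rw [s3]; norm_num) (by norm_num) (by norm_num) (Or.inr rfl) hα
      (by
        rw [hχR]
        exact pow_ne_zero m (neg_ne_zero.mpr Complex.I_ne_zero))
      (by simp [UHP])
      (by
        push_cast
        linear_combination (-(Real.sqrt 3 : ℂ) ^ 2 / 12) * hI + s3 / 12)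
      (by ring)
      (by
        have := hneI 3 (Real.sqrt 3) h30
        intro h
        apply this
        linear_combination 6 * h)
      hf₀.1 hf₁.1 (LE.R3_act hf₀) (LE.R3_act hf₁) hf' hW hS
    refine ⟨|d₁|, |d₂|, LE.odd_abs _ h10, LE.odd_abs _ h20, ?_, ?_, ?_, ?_⟩
    · rw [odd_abs]
      apply LE.odd_of
      have e : ((3 : ℕ) : ℂ) * (((Real.sqrt 3 : ℂ))⁻¹ * Complex.I) ^ 2 = -1 := by
        rw [mul_pow, inv_pow, s3, hI]
        norm_num
      rw [e] at h11
      exact h11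
    · have e : ((3 : ℕ) : ℂ) * ((3 + Real.sqrt 3 * Complex.I) / 6) ^ 2
          = (1 + Real.sqrt 3 * Complex.I) / 2 := by
        push_cast
        linear_combination ((Real.sqrt 3 : ℂ) ^ 2 / 12) * hI - s3 / 12
      rw [e] at h21
      have := LE.gcd_of _ (by
        linear_combination ((Real.sqrt 3 : ℂ) ^ 2 / 4) * hI - s3 / 4) d₂ h21
      rw [← this]
      simp [Int.gcd, Int.natAbs_abs]
    · rw [LE.abs_sq]
      exact h12
    · rw [LE.abs_sq]
      exact h22
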